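/- Let G be a simple connected C4-free positively LLY-curved graph with minimum degree at least 2 and maximum degree at least 4. Then the maximum degree of G is even. -/

import Mathlib

open Finset

noncomputable section
open scoped Classical

variable {V : Type*}

/-- Degree of a vertex. -/
def deg [Fintype V] (G : SimpleGraph V) (x : V) : ℕ :=
  (Finset.univ.filter fun z => G.Adj x z).card

/-- Maximum degree. -/
def maxDeg [Fintype V] (G : SimpleGraph V) : ℕ :=
  Finset.univ.sup (deg G)

/-- Normalized graph Laplacian. -/
def lap [Fintype V] (G : SimpleGraph V) (f : V → ℝ) (x : V) : ℝ :=
  (deg G x : ℝ)⁻¹ * ∑ z ∈ Finset.univ.filter (fun z => G.Adj x z), (f z - f x)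

/-- `f` is 1-Lipschitz with respect to the graph distance. -/
def Lip1 (G : SimpleGraph V) (f : V → ℝ) : Prop :=
  ∀ u v : V, |f u - f v| ≤ (G.dist u v : ℝ)

/-- Lin-Lu-Yau curvature via the Münch–Wojciechowski limit-free formulation. -/
def kappa [Fintype V] (G : SimpleGraph V) (x y : V) : ℝ :=
  sInf {r : ℝ | ∃ f : V → ℝ, Lip1 G f ∧ f y - f x = 1 ∧ r = lap G f x - lap G f y}

/-- Every edge has positive Lin-Lu-Yau curvature. -/
def PosLLY [Fintype V] (G : SimpleGraph V) : Prop :=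
  ∀ x y : V, G.Adj x y → 0 < kappa G x y

/-- `G` contains no 4-cycle (as a subgraph). -/
def C4Free (G : SimpleGraph V) : Prop :=
  ∀ a b c d : V, a ≠ b → b ≠ c → c ≠ d → d ≠ a → a ≠ c → b ≠ d →
    ¬(G.Adj a b ∧ G.Adj b c ∧ G.Adj c d ∧ G.Adj d a)

/-- Cycle graph on `ZMod n`. -/
def cyc (n : ℕ) : SimpleGraph (ZMod n) :=
  SimpleGraph.fromRel (fun i j => j = i + 1)

/-- Friendship graph `F_k`: `k` triangles sharing the common vertex `0`. -/
def friendship (k : ℕ) : SimpleGraph (Fin (2 * k + 1)) :=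
  SimpleGraph.fromRel (fun i j => i.val = 0 ∨ j.val = 0 ∨ (i.val + 1) / 2 = (j.val + 1) / 2)

/-- The graph `T`: a triangle `0,1,2` and a vertex `3` joined to each triangle
vertex by a path of length two (through `4,5,6` respectively). -/
def graphT : SimpleGraph (Fin 7) :=
  SimpleGraph.fromRel (fun i j => (i, j) ∈
    ([(0,1),(1,2),(0,2),(0,4),(4,3),(1,5),(5,3),(2,6),(6,3)] : List (Fin 7 × Fin 7)))

theorem lip1_of_adj (G : SimpleGraph V) (hconn : G.Connected) (f : V → ℝ)
    (h : ∀ u v, G.Adj u v → |f u - f v| ≤ 1) : Lip1 G f := by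
  have key : ∀ (u v : V) (p : G.Walk u v), |f u - f v| ≤ (p.length : ℝ) := by
    intro u v p
    induction p with
    | nil => simp
    | cons hadj q ih =>
      have h1 := h _ _ hadj
      rw [SimpleGraph.Walk.length_cons]
      push_cast
      rw [abs_le] at *
      constructor <;> linarith [h1.1, h1.2, ih.1, ih.2]
  intro u v
  obtain ⟨p, hp⟩ := hconn.exists_walk_length_eq_dist u v
  rw [← hp]
  exact key u v p

theorem kappa_le_zero [Fintype V] (G : SimpleGraph V) (x y : V) (f : V → ℝ)
    (hf : Lip1 G f) (h1 : f y - f x = 1) (hl : lap G f x - lap G f y ≤ 0) :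
    kappa G x y ≤ 0 := by
  unfold kappa
  by_cases hb : BddBelow {r : ℝ | ∃ f : V → ℝ, Lip1 G f ∧ f y - f x = 1 ∧ r = lap G f x - lap G f y}
  · exact (csInf_le hb ⟨f, hf, h1, rfl⟩).trans hl
  · exact (Real.sInf_of_not_bddBelow hb).le

theorem exists_triangle [Fintype V] (G : SimpleGraph V) (hconn : G.Connected)
    (h4 : C4Free G) (hpos : PosLLY G) (hmin : ∀ v : V, 2 ≤ deg G v)
    (x y : V) (hxy : G.Adj x y) (hx : 4 ≤ deg G x) :
    ∃ z, G.Adj x z ∧ G.Adj y z := by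
  by_contra hno
  push Not at hno
  have hne : x ≠ y := hxy.ne
  set f : V → ℝ := fun v => if G.Adj x v ∧ v ≠ y then -1 else
    if v = y ∨ (G.Adj y v ∧ v ≠ x) then 1 else 0 with hfdef
  have fx : f x = 0 := by simp [hfdef, hne]
  have fy : f y = 1 := by simp [hfdef]
  have fA : ∀ v, G.Adj x v → v ≠ y → f v = -1 := by
    intro v h h'; simp [hfdef, h, h']
  have fB : ∀ v, G.Adj y v → v ≠ x → f v = 1 := by
    intro v h h'
    have : ¬ G.Adj x v := fun hh => hno v hh h
    simp [hfdef, h, h', this]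
  have hlip : Lip1 G f := by
    apply lip1_of_adj G hconn
    have hAB : ∀ u v, G.Adj u v → (G.Adj x u ∧ u ≠ y) →
        ¬ (v = y ∨ (G.Adj y v ∧ v ≠ x)) := by
      rintro u v huv ⟨hu, huy⟩ (rfl | ⟨hv, hvx⟩)
      · exact hno u hu huv.symm
      · exact h4 x u v y hu.ne huv.ne hv.ne.symm hne.symm hvx.symm huy
          ⟨hu, huv, hv.symm, hxy.symm⟩
    intro u v huv
    have h1 := hAB u v huv
    have h2 := hAB v u huv.symm
    simp only [hfdef]
    split_ifs with a b c d e g <;> first | (norm_num; done) | (exfalso; tauto)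
  have lx : lap G f x = 2 / (deg G x : ℝ) - 1 := by
    unfold lap
    have hmem : y ∈ Finset.univ.filter (fun z => G.Adj x z) := by simp [hxy]
    rw [← Finset.add_sum_erase _ _ hmem]
    have : ∑ z ∈ (Finset.univ.filter (fun z => G.Adj x z)).erase y, (f z - f x)
        = ∑ z ∈ (Finset.univ.filter (fun z => G.Adj x z)).erase y, (-1 : ℝ) := by
      apply Finset.sum_congr rfl
      intro z hz
      simp at hz
      rw [fA z hz.2 hz.1, fx]; norm_num
    rw [this, Finset.sum_const, Finset.card_erase_of_mem hmem, fx, fy]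
    change (deg G x : ℝ)⁻¹ * (1 - 0 + (deg G x - 1) • (-1 : ℝ)) = _
    have h0 : (deg G x : ℝ) ≠ 0 := by
      have : 0 < deg G x := by omega
      positivity
    rw [nsmul_eq_mul, Nat.cast_sub (by omega)]
    field_simp
    push_cast
    ring
  have ly : lap G f y = -1 / (deg G y : ℝ) := by
    unfold lap
    have hmem : x ∈ Finset.univ.filter (fun z => G.Adj y z) := by simp [hxy.symm]
    rw [← Finset.add_sum_erase _ _ hmem]
    have : ∑ z ∈ (Finset.univ.filter (fun z => G.Adj y z)).erase x, (f z - f y) = 0 := by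
      apply Finset.sum_eq_zero
      intro z hz
      simp at hz
      rw [fB z hz.2 hz.1, fy]; norm_num
    rw [this, fx, fy]
    ring
  have hk := kappa_le_zero G x y f hlip (by rw [fx, fy]; norm_num) (by
    rw [lx, ly]
    have a : (4 : ℝ) ≤ deg G x := by exact_mod_cast hx
    have b : (2 : ℝ) ≤ deg G y := by exact_mod_cast hmin y
    have a' : 2 / (deg G x : ℝ) ≤ 1 / 2 := by
      rw [div_le_div_iff₀ (by linarith) (by norm_num)]; linarith
    have b' : 1 / (deg G y : ℝ) ≤ 1 / 2 := by
      rw [div_le_div_iff₀ (by linarith) (by norm_num)]; linarith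
    rw [neg_div]
    linarith)
  exact absurd (hpos x y hxy) (not_lt.mpr hk)

theorem even_deg [Fintype V] (G : SimpleGraph V) (hconn : G.Connected)
    (h4 : C4Free G) (hpos : PosLLY G) (hmin : ∀ v : V, 2 ≤ deg G v)
    (x : V) (hx : 4 ≤ deg G x) : Even (deg G x) := by
  have H : ∀ y, G.Adj x y → ∃ z, G.Adj x z ∧ G.Adj y z := fun y hy =>
    exists_triangle G hconn h4 hpos hmin x y hy hx
  choose! g hg using H
  have hinv : ∀ y, G.Adj x y → g (g y) = y := by
    intro y hy
    by_contra hne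
    obtain ⟨h1, h2⟩ := hg y hy
    obtain ⟨h3, h5⟩ := hg (g y) h1
    exact h4 x y (g y) (g (g y)) hy.ne h2.ne h5.ne h3.ne.symm h1.ne (Ne.symm hne)
      ⟨hy, h2, h5, h3.symm⟩
  have : ((deg G x : ℕ) : ZMod 2) = 0 := by
    unfold deg
    rw [Finset.cast_card]
    refine Finset.sum_involution (fun a _ => g a) ?_ ?_ ?_ ?_
    · intro a ha; decide
    · intro a ha _
      simp at ha
      exact (hg a ha).2.ne.symm
    · intro a ha
      simp at ha
      simp [(hg a ha).1]
    · intro a ha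
      simp at ha
      exact hinv a ha
  rw [ZMod.natCast_eq_zero_iff] at this
  exact even_iff_two_dvd.mpr this

theorem stmt9 [Fintype V] (G : SimpleGraph V) (hconn : G.Connected)
    (h4 : C4Free G) (hpos : PosLLY G) (hmin : ∀ v : V, 2 ≤ deg G v)
    (hmax : 4 ≤ maxDeg G) :
    Even (maxDeg G) := by
  have hne : (Finset.univ : Finset V).Nonempty := by
    obtain ⟨v⟩ := hconn.nonempty
    exact ⟨v, Finset.mem_univ v⟩
  obtain ⟨x, -, hx⟩ := Finset.exists_mem_eq_sup Finset.univ hne (deg G)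
  have hx' : maxDeg G = deg G x := hx
  rw [hx'] at hmax ⊢
  exact even_deg G hconn h4 hpos hmin x hmax
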